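/- Let N be an even positive integer and p an integer with 2 ≤ p ≤ N/2; assume u^p[2n]² + v^p[2n]² > 0 for every n. Define Ψ_{±,λ} = ψ_{[1],λ}^p ± i·C(ψ_{[1],λ}^p), and the 2D quasi-analytic wavelet packets Ψ_{++,j,l}[k,n] = Ψ_{+,j}[k]·Ψ_{+,l}[n] and Ψ_{+−,j,l}[k,n] = Ψ_{+,j}[k]·Ψ_{−,l}[n] for j,l ∈ {0,1}. For X ∈ Π[N,N] define X_+ = Σ_{j,l∈{0,1}} Σ_{a,b=0}^{N/2−1} ⟨X, Ψ_{++,j,l}[·−2a, ·−2b]⟩·Ψ_{++,j,l}[·−2a, ·−2b] and X_− analogously with Ψ_{+−,j,l}. Then X_+ = 4·(X + i·H^h(X) + i·H^v(X) − H^h(H^v(X))) and X_− = 4·(X − i·H^h(X) + i·H^v(X) + H^h(H^v(X))); consequently (X_+ + X_−)/8 = X + i·H^v(X), and if X is real-valued then X = Re((X_+ + X_−)/8). -/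

import Mathlib

open MeasureTheory

namespace WP

/-- The root of unity ω = e^{2πi/N}. -/
noncomputable def ww (N : ℕ) : ℂ := Complex.exp (2 * Real.pi * Complex.I / N)

/-- DFT of a signal `x ∈ Π[N]`: x̂[n] = Σ_{k=0}^{N−1} ω^{−kn} x[k]. -/
noncomputable def dft (N : ℕ) (x : ℤ → ℂ) (n : ℤ) : ℂ :=
  ∑ k ∈ Finset.range N, ww N ^ (-((k : ℤ) * n)) * x k

/-- Inner product on `Π[N]`. -/
noncomputable def inner1 (N : ℕ) (x y : ℤ → ℂ) : ℂ :=
  ∑ k ∈ Finset.range N, x k * (starRingEnd ℂ) (y k)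

/-- The discrete periodic Hilbert transform, defined via the DFT:
    Ĥ(x)[n] = −i·x̂[n] for 0<n<N/2, i·x̂[n] for N/2<n<N, 0 at n=0 and n=N/2. -/
noncomputable def hilbertT (N : ℕ) (x : ℤ → ℂ) (k : ℤ) : ℂ :=
  (N : ℂ)⁻¹ * ∑ n ∈ Finset.range N,
    (if 0 < n ∧ n < N / 2 then -Complex.I else if N / 2 < n ∧ n < N then Complex.I else 0) *
      dft N x n * ww N ^ ((k * (n : ℤ)))

/-- The complementary-WP operator `C`, defined via the DFT:
    Ĉ(x)[n] = −i·x̂[n] for 0<n<N/2, i·x̂[n] for N/2<n<N, x̂[0] at 0, x̂[N/2] at N/2. -/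
noncomputable def cwpT (N : ℕ) (x : ℤ → ℂ) (k : ℤ) : ℂ :=
  (N : ℂ)⁻¹ * ∑ n ∈ Finset.range N,
    (if n = 0 ∨ n = N / 2 then 1 else if n < N / 2 then -Complex.I else Complex.I) *
      dft N x n * ww N ^ ((k * (n : ℤ)))

/-- The order-p B-spline b^p(t). -/
noncomputable def bspline (p : ℕ) (t : ℝ) : ℝ :=
  (1 / (Nat.factorial (p - 1) : ℝ)) *
    ∑ k ∈ Finset.range (p + 1),
      (-1 : ℝ) ^ k * (p.choose k : ℝ) * max (t + (p : ℝ) / 2 - (k : ℝ)) 0 ^ (p - 1)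

/-- u^p[n] = Σ_{k=−N/2}^{N/2−1} ω^{−kn} b^p(k). -/
noncomputable def uSeq (N p : ℕ) (n : ℤ) : ℂ :=
  ∑ k ∈ Finset.range N,
    ww N ^ (-(((k : ℤ) - (N : ℤ) / 2) * n)) * (bspline p ((k : ℝ) - (N : ℝ) / 2) : ℂ)

/-- v^p[n] = e^{−πin/N} Σ_{k=−N/2}^{N/2−1} ω^{−kn} b^p(k+1/2). -/
noncomputable def vSeq (N p : ℕ) (n : ℤ) : ℂ :=
  Complex.exp (-Real.pi * Complex.I * n / N) *
    ∑ k ∈ Finset.range N,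
      ww N ^ (-(((k : ℤ) - (N : ℤ) / 2) * n)) *
        (bspline p ((k : ℝ) - (N : ℝ) / 2 + 1 / 2) : ℂ)

/-- The span-two discrete-time B-spline b_{[1]}^p ∈ Π[N]:
    the N-periodic signal with b_{[1]}^p[k] = b^p(k/2)/2 for −N/2 ≤ k ≤ N/2−1. -/
noncomputable def bs1 (N p : ℕ) (k : ℤ) : ℂ :=
  ((bspline p ((((k + (N : ℤ) / 2) % (N : ℤ) - (N : ℤ) / 2 : ℤ) : ℝ) / 2) : ℝ) : ℂ) / 2

/-- Its DFT b̂_{[1]}^p[n] = Σ_{k=−N/2}^{N/2−1} ω^{−kn} b_{[1]}^p[k]. -/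
noncomputable def bhat1 (N p : ℕ) (n : ℤ) : ℂ :=
  ∑ k ∈ Finset.range N,
    ww N ^ (-(((k : ℤ) - (N : ℤ) / 2) * n)) * bs1 N p ((k : ℤ) - (N : ℤ) / 2)

/-- Υ^p[n] = (u^p[2n]² + v^p[2n]²)/4. -/
noncomputable def upsilon (N p : ℕ) (n : ℤ) : ℂ :=
  (uSeq N p (2 * n) ^ 2 + vSeq N p (2 * n) ^ 2) / 4

/-- β[n] = b̂_{[1]}^p[n] / √(Υ^p[n]). -/
noncomputable def betaS (N p : ℕ) (n : ℤ) : ℂ := bhat1 N p n / upsilon N p n ^ ((1 : ℂ) / 2)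

/-- α[n] = ω^n · β[n+N/2]. -/
noncomputable def alphaS (N p : ℕ) (n : ℤ) : ℂ := ww N ^ n * betaS N p (n + (N : ℤ) / 2)

/-- The first-level wavelet packets ψ_{[1],λ}^p, λ = 0,1, defined via their DFTs
    ψ̂_{[1],0}^p[n] = β[n] and ψ̂_{[1],1}^p[n] = α[n]. -/
noncomputable def psi1 (N p lam : ℕ) (k : ℤ) : ℂ :=
  (N : ℂ)⁻¹ * ∑ n ∈ Finset.range N,
    (if lam = 0 then betaS N p n else alphaS N p n) * ww N ^ ((k * (n : ℤ)))


open scoped ComplexOrder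

/-- Inner product on Π[N,N]. -/
noncomputable def inner2 (N : ℕ) (X Y : ℤ → ℤ → ℂ) : ℂ :=
  ∑ k ∈ Finset.range N, ∑ n ∈ Finset.range N, X k n * (starRingEnd ℂ) (Y k n)

/-- Hilbert transform applied in the first (column) variable of a 2D signal. -/
noncomputable def Hv (N : ℕ) (X : ℤ → ℤ → ℂ) (k n : ℤ) : ℂ := hilbertT N (fun j => X j n) k

/-- Hilbert transform applied in the second (row) variable of a 2D signal. -/
noncomputable def Hh (N : ℕ) (X : ℤ → ℤ → ℂ) (k n : ℤ) : ℂ := hilbertT N (X k) n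

/-- First-level quasi-analytic wavelet packets Ψ_{±,λ} = ψ_{[1],λ}^p ± i·C(ψ_{[1],λ}^p). -/
noncomputable def qwpP (N p lam : ℕ) (k : ℤ) : ℂ :=
  psi1 N p lam k + Complex.I * cwpT N (psi1 N p lam) k

noncomputable def qwpM (N p lam : ℕ) (k : ℤ) : ℂ :=
  psi1 N p lam k - Complex.I * cwpT N (psi1 N p lam) k

/-- X_+ : frame expansion of X with the 2D qWPs Ψ_{++,j,l}[k,n] = Ψ_{+,j}[k]·Ψ_{+,l}[n]. -/
noncomputable def XPlus (N p : ℕ) (X : ℤ → ℤ → ℂ) (k n : ℤ) : ℂ :=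
  ∑ j ∈ Finset.range 2, ∑ l ∈ Finset.range 2,
    ∑ a ∈ Finset.range (N / 2), ∑ b ∈ Finset.range (N / 2),
      inner2 N X (fun k' n' => qwpP N p j (k' - 2 * (a : ℤ)) * qwpP N p l (n' - 2 * (b : ℤ))) *
        (qwpP N p j (k - 2 * (a : ℤ)) * qwpP N p l (n - 2 * (b : ℤ)))

/-- X_− : frame expansion of X with the 2D qWPs Ψ_{+−,j,l}[k,n] = Ψ_{+,j}[k]·Ψ_{−,l}[n]. -/
noncomputable def XMinus (N p : ℕ) (X : ℤ → ℤ → ℂ) (k n : ℤ) : ℂ :=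
  ∑ j ∈ Finset.range 2, ∑ l ∈ Finset.range 2,
    ∑ a ∈ Finset.range (N / 2), ∑ b ∈ Finset.range (N / 2),
      inner2 N X (fun k' n' => qwpP N p j (k' - 2 * (a : ℤ)) * qwpM N p l (n' - 2 * (b : ℤ))) *
        (qwpP N p j (k - 2 * (a : ℤ)) * qwpM N p l (n - 2 * (b : ℤ)))

/-!
Write `c = 1 ± i·m`, where `m` is the symbol of the operator `C`. Then the packets `Ψ_{±,λ}` have
the DFTs `c·ψ̂_λ`. The two polyphase components of `b_{[1]}^p` have the DFTs `u^p[2n]/2` and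
`v^p[2n]/2`, and `v^p[2n]` changes sign under `n ↦ n + N/2`. Hence `β[n]² + β[n + N/2]² = 2`, so
`ψ̂_0, ψ̂_1` form a paraunitary filter bank: in the frame operator of the even shifts of the packets
the aliased frequencies `n` and `n + N/2` cancel, and what remains is the Fourier multiplier with
symbol `|c|²`. Since `|c|²` is `2` at the frequencies `0` and `N/2`, where `m = 1`, and `4` or `0`
at the others, where `m = ∓i`, this multiplier is `2(1 ± i·H)`. The 2D expansion is the tensor
product of two such 1D frame operators.
-/

section PeriodicSums

open Finset

theorem sum_range_eq_sum_range_sub {M : Type*} [AddCommMonoid M] {N : ℕ} {f g : ℕ → M}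
    (h₀ : f 0 = g 0) (h : ∀ n, 0 < n → n < N → f n = g (N - n)) :
    ∑ n ∈ range N, f n = ∑ n ∈ range N, g n := by
  cases N with
  | zero => simp
  | succ L =>
    rw [sum_range_succ', sum_range_succ', h₀, ← sum_range_reflect]
    congr 1
    refine sum_congr rfl fun n hn ↦ ?_
    rw [mem_range] at hn
    rw [h _ (by omega) (by omega)]
    congr 1
    omega

theorem sum_range_add_of_periodic {G : Type*} [AddCommGroup G] {N : ℕ} {f : ℤ → G}
    (hf : Function.Periodic f N) (c : ℤ) :
    ∑ n ∈ range N, f (n + c) = ∑ n ∈ range N, f n := by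
  have hstep : ∀ b : ℤ, ∑ n ∈ range N, f (n + (b + 1)) = ∑ n ∈ range N, f (n + b) := fun b ↦ by
    have h := (sum_range_succ' (fun n : ℕ ↦ f (n + b)) N).symm.trans (sum_range_succ _ N)
    rw [Nat.cast_zero, zero_add, add_comm (N : ℤ), hf, add_left_inj] at h
    simpa only [Nat.cast_succ, add_assoc, add_comm (1 : ℤ)] using h
  induction c with
  | zero => simp
  | succ b ih => rw [hstep, ih]
  | pred b ih => rw [← ih, ← hstep, sub_add_cancel]

end PeriodicSums

section RootsOfUnity

open Finset
open scoped ComplexConjugate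

theorem sum_range_zpow_mul_eq_ite {K : Type*} [Field K] {ζ : K} {n : ℕ} (hζ : IsPrimitiveRoot ζ n)
    (z : ℤ) : ∑ a ∈ range n, ζ ^ ((a : ℤ) * z) = if (n : ℤ) ∣ z then (n : K) else 0 := by
  have hpow : ∀ a : ℕ, ζ ^ ((a : ℤ) * z) = (ζ ^ z) ^ a := fun a ↦ by
    rw [mul_comm, zpow_mul, zpow_natCast]
  simp only [hpow]
  split_ifs with hz
  · simp [(hζ.zpow_eq_one_iff_dvd z).2 hz]
  · have hne : 1 - ζ ^ z ≠ 0 := sub_ne_zero.2 (Ne.symm (mt (hζ.zpow_eq_one_iff_dvd z).1 hz))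
    have hone : (ζ ^ z) ^ n = 1 := by rw [← hpow, (hζ.zpow_eq_one_iff_dvd _).2 (dvd_mul_right _ _)]
    have hgeom := mul_neg_geom_sum (ζ ^ z) n
    rw [hone, sub_self] at hgeom
    exact (mul_eq_zero.1 hgeom).resolve_left hne

theorem natCast_dvd_natCast_sub_iff {N m n : ℕ} (hm : m < N) (hn : n < N) :
    (N : ℤ) ∣ (m : ℤ) - n ↔ m = n := by
  rw [← Nat.modEq_iff_dvd]
  exact ⟨fun h ↦ (h.eq_of_lt_of_lt hn hm).symm, fun h ↦ h ▸ Nat.ModEq.rfl⟩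

variable {N : ℕ}

theorem ww_ne_zero (N : ℕ) : ww N ≠ 0 := Complex.exp_ne_zero _

theorem isPrimitiveRoot_ww (hN : N ≠ 0) : IsPrimitiveRoot (ww N) N :=
  Complex.isPrimitiveRoot_exp N hN

theorem conj_ww_zpow (N : ℕ) (z : ℤ) : conj (ww N ^ z) = ww N ^ (-z) := by
  rw [map_zpow₀, zpow_neg, ← inv_zpow, ww, ← Complex.exp_conj, ← Complex.exp_neg]
  simp [neg_div, Complex.conj_ofNat]

theorem ww_zpow_natCast_mul (N : ℕ) (z : ℤ) : ww N ^ ((N : ℤ) * z) = 1 := by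
  rcases eq_or_ne N 0 with rfl | hN
  · simp
  · exact ((isPrimitiveRoot_ww hN).zpow_eq_one_iff_dvd _).2 (dvd_mul_right _ _)

theorem ww_zpow_half (hN : N ≠ 0) (hNe : Even N) : ww N ^ ((N : ℤ) / 2) = -1 := by
  have hsq := (isPrimitiveRoot_ww hN).pow (by omega) (Nat.div_two_mul_two_of_even hNe).symm
  exact_mod_cast hsq.eq_neg_one_of_two_right

end RootsOfUnity

section DiscreteFourierTransform

open Finset
open scoped ComplexConjugate

variable {N : ℕ}

theorem periodic_dft (N : ℕ) (x : ℤ → ℂ) : Function.Periodic (dft N x) N := fun n ↦ by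
  refine sum_congr rfl fun k _ ↦ ?_
  rw [show -((k : ℤ) * (n + N)) = -(k * n) + N * -k by ring, zpow_add₀ (ww_ne_zero N),
    ww_zpow_natCast_mul, mul_one]

theorem conj_dft {x : ℤ → ℂ} (hx : ∀ k, conj (x k) = x k) (n : ℤ) :
    conj (dft N x n) = dft N x (-n) := by
  simp only [dft, map_sum, map_mul, conj_ww_zpow, hx, mul_neg]

/-- The inverse of `dft`; a spectrum is given by its values at `0, …, N - 1`. -/
noncomputable def idft (N : ℕ) : (ℕ → ℂ) →ₗ[ℂ] (ℤ → ℂ) where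
  toFun f k := (N : ℂ)⁻¹ * ∑ n ∈ range N, f n * ww N ^ (k * (n : ℤ))
  map_add' f g := by
    ext k
    simp only [Pi.add_apply, add_mul, sum_add_distrib, mul_add]
  map_smul' c f := by
    ext k
    simp only [Pi.smul_apply, smul_eq_mul, RingHom.id_apply, mul_sum, mul_assoc, mul_left_comm c]

theorem idft_apply (N : ℕ) (f : ℕ → ℂ) (k : ℤ) :
    idft N f k = (N : ℂ)⁻¹ * ∑ n ∈ range N, f n * ww N ^ (k * (n : ℤ)) := rfl

theorem idft_congr {f g : ℕ → ℂ} (h : ∀ n < N, f n = g n) : idft N f = idft N g := by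
  ext k
  simp only [idft_apply]
  congr 1
  exact sum_congr rfl fun n hn ↦ by rw [h n (mem_range.1 hn)]

theorem idft_one (hN : N ≠ 0) (z : ℤ) : idft N 1 z = if (N : ℤ) ∣ z then 1 else 0 := by
  simp only [idft_apply, Pi.one_apply, one_mul, mul_comm z,
    sum_range_zpow_mul_eq_ite (isPrimitiveRoot_ww hN)]
  split_ifs
  · exact inv_mul_cancel₀ (Nat.cast_ne_zero.2 hN)
  · exact mul_zero _

theorem dft_idft (f : ℕ → ℂ) {n : ℕ} (hn : n < N) : dft N (idft N f) n = f n := by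
  calc dft N (idft N f) n = ∑ m ∈ range N, f m * idft N 1 ((m : ℤ) - n) := by
        simp only [dft, idft_apply, mul_sum, Pi.one_apply, one_mul]
        rw [sum_comm]
        refine sum_congr rfl fun m _ ↦ sum_congr rfl fun k _ ↦ ?_
        rw [show ((m : ℤ) - n) * k = -(k * n) + k * m by ring, zpow_add₀ (ww_ne_zero N)]
        ring
    _ = ∑ m ∈ range N, if m = n then f m else 0 := sum_congr rfl fun m hm ↦ by
        simp only [idft_one (Nat.ne_zero_of_lt hn),
          natCast_dvd_natCast_sub_iff (mem_range.1 hm) hn, mul_ite, mul_one, mul_zero]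
    _ = f n := by simp [hn]

/-- The operator multiplying the DFT of a signal by the symbol `m`. -/
noncomputable def fourierMultiplier (N : ℕ) : (ℕ → ℂ) →ₗ[ℂ] (ℤ → ℂ) →ₗ[ℂ] (ℤ → ℂ) :=
  LinearMap.mk₂ ℂ (fun m x ↦ idft N fun n ↦ m n * dft N x n)
    (fun m₁ m₂ x ↦ by
      rw [← map_add]
      exact idft_congr fun n _ ↦ add_mul _ _ _)
    (fun c m x ↦ by
      rw [← map_smul]
      exact idft_congr fun n _ ↦ mul_assoc _ _ _)
    (fun m x y ↦ by
      rw [← map_add]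
      exact idft_congr fun n _ ↦ by
        simp only [dft, Pi.add_apply, mul_add, sum_add_distrib])
    (fun c m x ↦ by
      rw [← map_smul]
      exact idft_congr fun n _ ↦ by
        simp only [dft, Pi.smul_apply, smul_eq_mul, mul_sum, mul_left_comm c])

theorem fourierMultiplier_apply (N : ℕ) (m : ℕ → ℂ) (x : ℤ → ℂ) :
    fourierMultiplier N m x = idft N fun n ↦ m n * dft N x n := rfl

theorem fourierMultiplier_idft (m f : ℕ → ℂ) :
    fourierMultiplier N m (idft N f) = idft N fun n ↦ m n * f n :=
  idft_congr fun n hn ↦ by rw [dft_idft f hn]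

theorem fourierMultiplier_eq_convolution (m : ℕ → ℂ) (x : ℤ → ℂ) (k : ℤ) :
    fourierMultiplier N m x k = ∑ j ∈ range N, x j * idft N m (k - j) := by
  simp only [fourierMultiplier_apply, idft_apply, dft, mul_sum, sum_mul]
  rw [sum_comm]
  refine sum_congr rfl fun j _ ↦ sum_congr rfl fun n _ ↦ ?_
  rw [show (k - j) * (n : ℤ) = -(j * n) + k * n by ring, zpow_add₀ (ww_ne_zero N)]
  ring

theorem periodic_idft (N : ℕ) (f : ℕ → ℂ) : Function.Periodic (idft N f) N := fun k ↦ by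
  simp only [idft_apply]
  congr 1
  refine sum_congr rfl fun n _ ↦ ?_
  rw [show (k + N) * (n : ℤ) = k * n + N * n by ring, zpow_add₀ (ww_ne_zero N),
    ww_zpow_natCast_mul, mul_one]

theorem fourierMultiplier_one (hN : N ≠ 0) {x : ℤ → ℂ} (hx : Function.Periodic x N) :
    fourierMultiplier N 1 x = x := by
  ext k
  have hper : Function.Periodic (fun j ↦ x j * idft N 1 (k - j)) N := fun j ↦ by
    simp only [hx j, ← sub_sub, (periodic_idft N 1).sub_eq]
  rw [fourierMultiplier_eq_convolution, ← sum_range_add_of_periodic hper k,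
    sum_eq_single_of_mem 0 (mem_range.2 (Nat.pos_of_ne_zero hN))]
  · simp [idft_one hN]
  · intro j hj hj0
    have hdvd : ¬ (N : ℤ) ∣ k - (j + k) := by
      rw [sub_add_cancel_right, dvd_neg, Int.natCast_dvd_natCast]
      exact Nat.not_dvd_of_pos_of_lt (Nat.pos_of_ne_zero hj0) (mem_range.1 hj)
    rw [idft_one hN, if_neg hdvd, mul_zero]

theorem conj_fourierMultiplier {m : ℕ → ℂ} (hm₀ : conj (m 0) = m 0)
    (hm : ∀ n, 0 < n → n < N → conj (m n) = m (N - n)) {x : ℤ → ℂ}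
    (hx : ∀ k, conj (x k) = x k) (k : ℤ) :
    conj (fourierMultiplier N m x k) = fourierMultiplier N m x k := by
  simp only [fourierMultiplier_apply, idft_apply, map_mul, map_sum, map_inv₀,
    Complex.conj_natCast, conj_ww_zpow, conj_dft hx]
  congr 1
  refine sum_range_eq_sum_range_sub (by simp [hm₀]) fun n hn hnN ↦ ?_
  rw [hm n hn hnN, Nat.cast_sub hnN.le, (periodic_dft N x).sub_eq',
    show k * ((N : ℤ) - n) = -(k * n) + N * k by ring, zpow_add₀ (ww_ne_zero N),
    ww_zpow_natCast_mul, mul_one]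

end DiscreteFourierTransform

section FrameOperators

open Finset
open scoped ComplexConjugate

variable {ι κ : Type*} {N d M : ℕ}

/-- The frame operator `x ↦ ∑ i ∈ s, ⟨x, f i⟩ f i` of a finite family of signals. -/
noncomputable def frameOp (N : ℕ) (s : Finset ι) (f : ι → ℤ → ℂ) (x : ℤ → ℂ) (k : ℤ) : ℂ :=
  ∑ i ∈ s, inner1 N x (f i) * f i k

/-- The translates of the signals `ψ i` by the multiples of `d`; the index `(i, a)` stands for
`ψ i[· - d a]`. -/
def translates (d : ℕ) (ψ : ι → ℤ → ℂ) (i : ι × ℕ) : ℤ → ℂ :=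
  fun k ↦ ψ i.1 (k - d * i.2)

/-- The paraunitarity (perfect reconstruction) condition on a filter bank with frequency responses
`F i`, `i ∈ s`, followed by decimation by `d`. The frequencies `m` and `n` are indistinguishable
after the decimation iff they agree modulo `M = N / d`; the condition asks that these
aliased contributions cancel. -/
def IsParaunitary (N d M : ℕ) (s : Finset ι) (F : ι → ℕ → ℂ) : Prop :=
  ∀ m < N, ∀ n < N, m ≡ n [MOD M] →
    ∑ i ∈ s, F i m * conj (F i n) = if m = n then (d : ℂ) else 0

theorem inner1_translates_idft (x : ℤ → ℂ) (G : ι → ℕ → ℂ) (i : ι × ℕ) :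
    inner1 N x (translates d (fun j ↦ idft N (G j)) i) =
      idft N (fun n ↦ conj (G i.1 n) * dft N x n) (d * i.2) := by
  simp only [inner1, translates, idft_apply, dft, map_mul, map_sum, map_inv₀,
    Complex.conj_natCast, conj_ww_zpow, mul_sum, sum_mul]
  rw [sum_comm]
  refine sum_congr rfl fun n _ ↦ sum_congr rfl fun k _ ↦ ?_
  rw [show -((k - d * i.2) * (n : ℤ)) = -(k * n) + d * i.2 * n by ring, zpow_add₀ (ww_ne_zero N)]
  ring

theorem sum_range_ww_zpow_mul_sub (hN : N ≠ 0) (hdM : d * M = N) (m n : ℕ) :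
    ∑ a ∈ range M, ww N ^ ((d * a : ℤ) * (n - m)) = if m ≡ n [MOD M] then (M : ℂ) else 0 := by
  have hroot : IsPrimitiveRoot (ww N ^ d) M := (isPrimitiveRoot_ww hN).pow (by omega) hdM.symm
  simp only [Nat.modEq_iff_dvd, ← sum_range_zpow_mul_eq_ite hroot, mul_assoc,
    zpow_mul _ (d : ℤ), zpow_natCast]

theorem sum_range_idft_mul_idft_sub (hN : N ≠ 0) (hdM : d * M = N) (f g : ℕ → ℂ) (k : ℤ) :
    ∑ a ∈ range M, idft N f (d * a) * idft N g (k - d * a) =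
      idft N (fun n ↦ (d : ℂ)⁻¹ * ∑ m ∈ range N with m ≡ n [MOD M], f m * g n) k := by
  have : (d : ℂ) ≠ 0 := by rintro h; simp_all
  have : (M : ℂ) ≠ 0 := by rintro h; simp_all
  have hNdM : (N : ℂ) = d * M := by exact_mod_cast hdM.symm
  have hterm : ∀ (a m n : ℕ), (N : ℂ)⁻¹ * (f m * ww N ^ ((d * a : ℤ) * m)) *
      ((N : ℂ)⁻¹ * (g n * ww N ^ ((k - d * a) * (n : ℤ)))) =
      (N : ℂ)⁻¹ ^ 2 * (f m * g n * ww N ^ (k * (n : ℤ))) * ww N ^ ((d * a : ℤ) * (m - n)) := by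
    intro a m n
    rw [show (k - d * a) * (n : ℤ) = k * n + -(d * a * n) by ring,
      show (d * a : ℤ) * (m - n) = d * a * m + -(d * a * n) by ring, zpow_add₀ (ww_ne_zero N),
      zpow_add₀ (ww_ne_zero N)]
    ring
  have hidft : ∀ (h : ℕ → ℂ) (j : ℤ),
      idft N h j = ∑ n ∈ range N, (N : ℂ)⁻¹ * (h n * ww N ^ (j * (n : ℤ))) :=
    fun _ _ ↦ mul_sum _ _ _
  calc _ = ∑ a ∈ range M, ∑ m ∈ range N, ∑ n ∈ range N, (N : ℂ)⁻¹ ^ 2 *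
        (f m * g n * ww N ^ (k * (n : ℤ))) * ww N ^ ((d * a : ℤ) * (m - n)) := by
        simp only [hidft, sum_mul_sum, hterm]
    _ = ∑ n ∈ range N, ∑ m ∈ range N, (N : ℂ)⁻¹ ^ 2 * (f m * g n * ww N ^ (k * (n : ℤ))) *
        ∑ a ∈ range M, ww N ^ ((d * a : ℤ) * (m - n)) := by
        rw [sum_comm, sum_congr rfl fun m _ ↦ sum_comm, sum_comm]
        simp only [mul_sum]
    _ = ∑ n ∈ range N, ∑ m ∈ range N with m ≡ n [MOD M],
        (N : ℂ)⁻¹ * ((d : ℂ)⁻¹ * (f m * g n) * ww N ^ (k * (n : ℤ))) := by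
        refine sum_congr rfl fun n _ ↦ (sum_congr rfl fun m _ ↦ ?_).trans (sum_filter _ _).symm
        simp only [sum_range_ww_zpow_mul_sub hN hdM, Nat.ModEq.comm (a := n), hNdM, mul_ite,
          mul_zero]
        field_simp
    _ = _ := by simp only [idft_apply, mul_sum, sum_mul]

theorem frameOp_translates_idft (hN : N ≠ 0) (hdM : d * M = N) {s : Finset ι} {F : ι → ℕ → ℂ}
    (hF : IsParaunitary N d M s F) (c : ℕ → ℂ) :
    frameOp N (s ×ˢ range M) (translates d fun i ↦ idft N fun n ↦ c n * F i n) =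
      fourierMultiplier N fun n ↦ c n * conj (c n) := by
  have hd : (d : ℂ) ≠ 0 := by rintro h; simp_all
  ext x k
  simp only [frameOp, sum_product, inner1_translates_idft]
  simp only [translates, sum_range_idft_mul_idft_sub hN hdM]
  rw [← Finset.sum_apply, ← map_sum, fourierMultiplier_apply]
  refine congrFun (idft_congr fun n hn ↦ ?_) k
  calc _ = (d : ℂ)⁻¹ * ∑ m ∈ range N with m ≡ n [MOD M],
        c n * conj (c m) * dft N x m * ∑ i ∈ s, F i n * conj (F i m) := by
        simp only [Finset.sum_apply, mul_sum, map_mul]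
        rw [sum_comm]
        exact sum_congr rfl fun _ _ ↦ sum_congr rfl fun _ _ ↦ by ring
    _ = (d : ℂ)⁻¹ * ∑ m ∈ range N with m ≡ n [MOD M],
        c n * conj (c m) * dft N x m * (if n = m then (d : ℂ) else 0) := by
        congr 1
        refine sum_congr rfl fun m hm ↦ ?_
        obtain ⟨hmN, hmn⟩ := mem_filter.1 hm
        rw [hF n hn m (mem_range.1 hmN) hmn.symm]
    _ = c n * conj (c n) * dft N x n := by
        simp only [mul_ite, mul_zero, sum_ite_eq, mem_filter, mem_range, hn, Nat.ModEq.rfl]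
        field_simp
        simp

theorem inner2_mul (X : ℤ → ℤ → ℂ) (f g : ℤ → ℂ) :
    inner2 N X (fun k n ↦ f k * g n) = inner1 N (fun n ↦ inner1 N (fun k ↦ X k n) f) g := by
  simp only [inner2, inner1, map_mul, sum_mul]
  rw [sum_comm]
  exact sum_congr rfl fun _ _ ↦ sum_congr rfl fun _ _ ↦ by ring

theorem inner1_sum_mul (s : Finset ι) (x : ι → ℤ → ℂ) (c : ι → ℂ) (y : ℤ → ℂ) :
    inner1 N (fun n ↦ ∑ i ∈ s, x i n * c i) y = ∑ i ∈ s, inner1 N (x i) y * c i := by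
  simp only [inner1, sum_mul]
  rw [sum_comm]
  exact sum_congr rfl fun _ _ ↦ sum_congr rfl fun _ _ ↦ mul_right_comm _ _ _

theorem sum_inner2_mul_eq_frameOp_frameOp (s : Finset ι) (t : Finset κ) (f : ι → ℤ → ℂ)
    (g : κ → ℤ → ℂ) (X : ℤ → ℤ → ℂ) (k n : ℤ) :
    ∑ i ∈ s, ∑ j ∈ t, inner2 N X (fun k' n' ↦ f i k' * g j n') * (f i k * g j n) =
      frameOp N t g (fun n' ↦ frameOp N s f (fun k' ↦ X k' n') k) n := by
  rw [sum_comm]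
  refine sum_congr rfl fun j _ ↦ ?_
  simp only [frameOp, inner2_mul, inner1_sum_mul, sum_mul, mul_assoc]

end FrameOperators

section IntegerSums

open Finset

variable {α : Type*} [AddCommMonoid α] [TopologicalSpace α]

theorem hasSum_sum_range_sub {f : ℤ → α} {N : ℕ} {a : ℤ}
    (hf : ∀ k, k < -a ∨ N - a ≤ k → f k = 0) : HasSum f (∑ k ∈ range N, f (k - a)) := by
  have hinj : Function.Injective fun k : ℕ ↦ (k : ℤ) - a :=
    sub_left_injective.comp Nat.cast_injective
  rw [← sum_image (f := f) (g := fun k : ℕ ↦ (k : ℤ) - a) hinj.injOn]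
  refine hasSum_sum_of_ne_finset_zero fun k hk ↦ hf k ?_
  by_contra! hka
  exact hk (mem_image.2 ⟨(k + a).toNat, mem_range.2 (by omega), by omega⟩)

theorem hasSum_int_even_add_odd [ContinuousAdd α] {f : ℤ → α} {a b : α}
    (ha : HasSum (fun k ↦ f (2 * k)) a) (hb : HasSum (fun k ↦ f (2 * k + 1)) b) :
    HasSum f (a + b) := by
  have heven : Function.Injective fun k : ℤ ↦ 2 * k := mul_right_injective₀ two_ne_zero
  have hodd : Function.Injective fun k : ℤ ↦ 2 * k + 1 := (add_left_injective 1).comp heven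
  refine HasSum.add_isCompl ?_ (heven.hasSum_range_iff.2 ha) (hodd.hasSum_range_iff.2 hb)
  simpa [Function.comp_def] using Int.isCompl_even_odd

end IntegerSums

section BSpline

open Finset

variable {p : ℕ}

theorem neg_one_pow_sub_eq_mul {R : Type*} [Ring R] {k n : ℕ} (hk : k ≤ n) :
    (-1 : R) ^ (n - k) = (-1) ^ n * (-1) ^ k := by
  obtain ⟨d, rfl⟩ := Nat.exists_eq_add_of_le' hk
  rw [Nat.add_sub_cancel, pow_add, mul_assoc, ← pow_add, Even.neg_one_pow ⟨k, rfl⟩, mul_one]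

theorem sum_alternating_choose_mul_sub_pow {R : Type*} [CommRing R] {n q : ℕ} (hq : q < n)
    (x : R) : ∑ k ∈ range (n + 1), (-1) ^ k * (n.choose k : R) * (x - k) ^ q = 0 := by
  calc ∑ k ∈ range (n + 1), (-1) ^ k * (n.choose k : R) * (x - k) ^ q
      = (-1) ^ n * (-1) ^ q * ∑ k ∈ range (n + 1),
          ((-1 : ℤ) ^ (n - k) * (n.choose k : ℤ)) • (-x + k • (1 : R)) ^ q := by
        rw [mul_sum]
        refine sum_congr rfl fun k hk ↦ ?_
        have hx : -x + k • (1 : R) = -1 * (x - k) := by simp; ring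
        rw [hx, mul_pow, zsmul_eq_mul, neg_one_pow_sub_eq_mul (mem_range_succ_iff.1 hk)]
        push_cast
        ring_nf
        simp
    _ = (-1) ^ n * (-1) ^ q * Nat.iterate (fwdDiff (1 : R)) n (fun r ↦ r ^ q) (-x) := by
        rw [fwdDiff_iter_eq_sum_shift]
    _ = 0 := by rw [fwdDiff_iter_pow_eq_zero_of_lt hq, Pi.zero_apply, mul_zero]

theorem max_zero_pow_eq {q : ℕ} (hq : q ≠ 0) (x : ℝ) :
    max x 0 ^ q = x ^ q - (-1) ^ q * max (-x) 0 ^ q := by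
  rcases le_total 0 x with h | h
  · rw [max_eq_left h, max_eq_right (neg_nonpos.2 h), zero_pow hq, mul_zero, sub_zero]
  · rw [max_eq_right h, max_eq_left (neg_nonneg.2 h), ← mul_pow, neg_one_mul, neg_neg, sub_self,
      zero_pow hq]

-- The `p`-th difference of `y ^ (p - 1)` vanishes, so in the definition of `bspline` the truncated
-- power `y₊ ^ (p - 1)` may be traded for a multiple of `(-y)₊ ^ (p - 1)`.
theorem bspline_neg (hp : 2 ≤ p) (t : ℝ) : bspline p (-t) = bspline p t := by
  obtain ⟨q, rfl⟩ := Nat.exists_eq_add_of_le' (one_le_two.trans hp)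
  set y := t + ((q + 1 : ℕ) : ℝ) / 2 with hy
  have hsplit : ∑ k ∈ range (q + 2), (-1) ^ k * ((q + 1).choose k : ℝ) * max (y - k) 0 ^ q =
      -∑ k ∈ range (q + 2), (-1) ^ k * ((q + 1).choose k : ℝ) *
        ((-1) ^ q * max (-(y - k)) 0 ^ q) := by
    rw [eq_neg_iff_add_eq_zero, ← sum_add_distrib]
    refine (sum_congr rfl fun k _ ↦ ?_).trans
      (sum_alternating_choose_mul_sub_pow q.lt_add_one y)
    rw [max_zero_pow_eq (by omega) (y - k), ← mul_add, sub_add_cancel]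
  rw [bspline, bspline, Nat.add_sub_cancel, hsplit, ← sum_neg_distrib, ← sum_range_reflect]
  congr 1
  refine sum_congr rfl fun k hk ↦ ?_
  have hkp : k ≤ q + 1 := mem_range_succ_iff.1 hk
  rw [Nat.add_sub_cancel, Nat.choose_symm hkp, neg_one_pow_sub_eq_mul hkp, Nat.cast_sub hkp,
    show -t + ((q + 1 : ℕ) : ℝ) / 2 - (((q + 1 : ℕ) : ℝ) - k) = -(y - k) by rw [hy]; ring]
  ring

theorem bspline_eq_zero_of_le (hp : 2 ≤ p) {t : ℝ} (ht : t ≤ -(p / 2)) : bspline p t = 0 := by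
  rw [bspline, sum_eq_zero fun k _ ↦ ?_, mul_zero]
  rw [max_eq_right (by linarith [Nat.cast_nonneg (α := ℝ) k]), zero_pow (by omega), mul_zero]

theorem bspline_eq_zero_of_le_abs (hp : 2 ≤ p) {t : ℝ} (ht : p / 2 ≤ |t|) : bspline p t = 0 := by
  rcases le_abs.1 ht with h | h
  · rw [← bspline_neg hp]
    exact bspline_eq_zero_of_le hp (neg_le_neg h)
  · exact bspline_eq_zero_of_le hp (le_neg.1 h)

end BSpline

section SplineSpectra

open Finset
open scoped ComplexConjugate

variable {N p : ℕ}

/-- The samples `b^p(k/2)/2` at all integers `k`; `bs1` is the periodization of their restriction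
to one period. -/
noncomputable def splineSample (p : ℕ) (k : ℤ) : ℂ := (bspline p ((k : ℝ) / 2) : ℂ) / 2

theorem splineSample_neg (hp : 2 ≤ p) (k : ℤ) : splineSample p (-k) = splineSample p k := by
  rw [splineSample, Int.cast_neg, neg_div, bspline_neg hp, splineSample]

theorem conj_splineSample (p : ℕ) (k : ℤ) : conj (splineSample p k) = splineSample p k := by
  rw [splineSample, map_div₀, Complex.conj_ofReal, Complex.conj_ofNat]

theorem splineSample_eq_zero (hp : 2 ≤ p) {k : ℤ} (hk : p ≤ |k|) : splineSample p k = 0 := by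
  have hk' : (p : ℝ) ≤ |(k : ℝ)| := by exact_mod_cast hk
  rw [splineSample, bspline_eq_zero_of_le_abs hp, Complex.ofReal_zero, zero_div]
  rw [abs_div, abs_two]
  exact div_le_div_of_nonneg_right hk' zero_le_two

theorem hasSum_bhat1 (hp : 2 ≤ p) (hpN : p ≤ N / 2) (n : ℤ) :
    HasSum (fun k : ℤ ↦ ww N ^ (-(k * n)) * splineSample p k) (bhat1 N p n) := by
  convert hasSum_sum_range_sub (N := N) (a := N / 2) fun k hk ↦ ?_ using 1
  · refine sum_congr rfl fun k hk ↦ ?_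
    rw [mem_range] at hk
    rw [bs1, sub_add_cancel, Int.emod_eq_of_lt (by omega) (by omega), splineSample]
  · rw [splineSample_eq_zero hp (le_abs.2 (by omega)), mul_zero]

theorem cast_half_of_even (hNe : Even N) : (((N : ℤ) / 2 : ℤ) : ℝ) = N / 2 := by
  rw [Int.cast_div (by exact_mod_cast hNe.two_dvd) two_ne_zero, Int.cast_natCast, Int.cast_ofNat]

theorem hasSum_uSeq (hNe : Even N) (hp : 2 ≤ p) (hpN : p ≤ N / 2) (n : ℤ) :
    HasSum (fun k : ℤ ↦ ww N ^ (-(2 * k * n)) * splineSample p (2 * k))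
      (uSeq N p (2 * n) / 2) := by
  rw [uSeq, sum_div]
  convert hasSum_sum_range_sub (N := N) (a := N / 2) fun k hk ↦ ?_ using 1
  · refine sum_congr rfl fun k _ ↦ ?_
    rw [splineSample, ← cast_half_of_even hNe, mul_div_assoc, mul_left_comm, mul_assoc]
    push_cast
    rw [mul_div_cancel_left₀ _ two_ne_zero]
  · rw [splineSample_eq_zero hp (le_abs.2 (by omega)), mul_zero]

theorem hasSum_vSeq (hNe : Even N) (hp : 2 ≤ p) (hpN : p ≤ N / 2) (n : ℤ) :
    HasSum (fun k : ℤ ↦ ww N ^ (-((2 * k + 1) * n)) * splineSample p (2 * k + 1))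
      (vSeq N p (2 * n) / 2) := by
  have hexp : Complex.exp (-Real.pi * Complex.I * (2 * n : ℤ) / N) = ww N ^ (-n) := by
    rw [ww, ← Complex.exp_int_mul]
    congr 1
    push_cast
    ring
  rw [vSeq, hexp, mul_sum, sum_div]
  convert hasSum_sum_range_sub (N := N) (a := N / 2) fun k hk ↦ ?_ using 1
  · refine sum_congr rfl fun k _ ↦ ?_
    rw [splineSample, ← cast_half_of_even hNe, ← mul_assoc, ← zpow_add₀ (ww_ne_zero N),
      mul_div_assoc]
    push_cast
    ring_nf
  · rw [splineSample_eq_zero hp (le_abs.2 (by omega)), mul_zero]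

theorem bhat1_eq_uSeq_add_vSeq (hNe : Even N) (hp : 2 ≤ p) (hpN : p ≤ N / 2) (n : ℤ) :
    bhat1 N p n = (uSeq N p (2 * n) + vSeq N p (2 * n)) / 2 := by
  rw [add_div]
  exact (hasSum_bhat1 hp hpN n).unique <|
    hasSum_int_even_add_odd (hasSum_uSeq hNe hp hpN n) (hasSum_vSeq hNe hp hpN n)

theorem conj_bhat1 (hp : 2 ≤ p) (hpN : p ≤ N / 2) (n : ℤ) : conj (bhat1 N p n) = bhat1 N p n := by
  have hconj := Complex.hasSum_conj'.2 (hasSum_bhat1 hp hpN n)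
  have hneg := (Equiv.neg ℤ).hasSum_iff.2 (hasSum_bhat1 hp hpN n)
  simp only [map_mul, conj_ww_zpow, conj_splineSample] at hconj
  simp only [Function.comp_def, Equiv.neg_apply, splineSample_neg hp, neg_mul] at hneg
  exact hconj.unique hneg

theorem uSeq_add_natCast (N p : ℕ) (n : ℤ) : uSeq N p (n + N) = uSeq N p n := by
  refine sum_congr rfl fun k _ ↦ ?_
  rw [show -(((k : ℤ) - N / 2) * (n + N)) = -((k - N / 2) * n) + N * -(k - N / 2) by ring,
    zpow_add₀ (ww_ne_zero N), ww_zpow_natCast_mul, mul_one]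

theorem vSeq_add_natCast (hN : N ≠ 0) (p : ℕ) (n : ℤ) : vSeq N p (n + N) = -vSeq N p n := by
  have hexp : Complex.exp (-Real.pi * Complex.I * (n + N : ℤ) / N) =
      -Complex.exp (-Real.pi * Complex.I * n / N) := by
    have : (N : ℂ) ≠ 0 := Nat.cast_ne_zero.2 hN
    rw [← Complex.exp_sub_pi_mul_I]
    congr 1
    push_cast
    field_simp
    ring
  rw [vSeq, vSeq, hexp, neg_mul]
  congr 2
  refine sum_congr rfl fun k _ ↦ ?_
  rw [show -(((k : ℤ) - N / 2) * (n + N)) = -((k - N / 2) * n) + N * -(k - N / 2) by ring,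
    zpow_add₀ (ww_ne_zero N), ww_zpow_natCast_mul, mul_one]

theorem two_mul_add_half (hNe : Even N) (n : ℤ) : 2 * (n + (N : ℤ) / 2) = 2 * n + N := by
  have := hNe.two_dvd
  omega

theorem upsilon_add_half (hN : N ≠ 0) (hNe : Even N) (p : ℕ) (n : ℤ) :
    upsilon N p (n + N / 2) = upsilon N p n := by
  rw [upsilon, upsilon, two_mul_add_half hNe, uSeq_add_natCast, vSeq_add_natCast hN, neg_sq]

theorem bhat1_add_half (hNe : Even N) (hp : 2 ≤ p) (hpN : p ≤ N / 2) (n : ℤ) :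
    bhat1 N p (n + N / 2) = (uSeq N p (2 * n) - vSeq N p (2 * n)) / 2 := by
  have hN : N ≠ 0 := by omega
  rw [bhat1_eq_uSeq_add_vSeq hNe hp hpN, two_mul_add_half hNe, uSeq_add_natCast,
    vSeq_add_natCast hN, sub_eq_add_neg]

theorem conj_cpow_of_nonneg {z : ℂ} (hz : 0 ≤ z) (y : ℝ) : conj (z ^ (y : ℂ)) = z ^ (y : ℂ) := by
  obtain ⟨r, hr, rfl⟩ := RCLike.nonneg_iff_exists_ofReal.1 hz
  exact (congrArg conj (Complex.ofReal_cpow hr y).symm).trans <|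
    (Complex.conj_ofReal _).trans (Complex.ofReal_cpow hr y)

theorem conj_betaS (hp : 2 ≤ p) (hpN : p ≤ N / 2) {n : ℤ} (hpos : 0 ≤ upsilon N p n) :
    conj (betaS N p n) = betaS N p n := by
  have hsqrt := conj_cpow_of_nonneg hpos (1 / 2)
  push_cast at hsqrt
  rw [betaS, map_div₀, conj_bhat1 hp hpN, hsqrt]

theorem betaS_add_half_add_half (hNe : Even N) (hp : 2 ≤ p) (hpN : p ≤ N / 2)
    (n : ℤ) : betaS N p (n + N / 2 + N / 2) = betaS N p n := by
  have hN : N ≠ 0 := by omega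
  rw [betaS, betaS, upsilon_add_half hN hNe, upsilon_add_half hN hNe,
    bhat1_add_half hNe hp hpN, two_mul_add_half hNe, uSeq_add_natCast, vSeq_add_natCast hN,
    sub_neg_eq_add, bhat1_eq_uSeq_add_vSeq hNe hp hpN]

theorem betaS_sq_add_betaS_sq (hNe : Even N) (hp : 2 ≤ p) (hpN : p ≤ N / 2) {n : ℤ}
    (hne : upsilon N p n ≠ 0) : betaS N p n ^ 2 + betaS N p (n + N / 2) ^ 2 = 2 := by
  have hN : N ≠ 0 := by omega
  have hsqrt : (upsilon N p n ^ ((1 : ℂ) / 2)) ^ 2 = upsilon N p n := by simp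
  rw [betaS, betaS, upsilon_add_half hN hNe, div_pow, div_pow, hsqrt, ← add_div,
    div_eq_iff hne, bhat1_eq_uSeq_add_vSeq hNe hp hpN, bhat1_add_half hNe hp hpN, upsilon]
  ring

end SplineSpectra

section WaveletPackets

open Finset
open scoped ComplexConjugate

variable {N p : ℕ}

/-- The values of the DFT of `ψ_{[1],λ}`. -/
noncomputable def psiHat (N p lam n : ℕ) : ℂ := if lam = 0 then betaS N p n else alphaS N p n

/-- The symbol of the Fourier multiplier `hilbertT N`. -/
noncomputable def hilbertSymbol (N n : ℕ) : ℂ :=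
  if 0 < n ∧ n < N / 2 then -Complex.I else if N / 2 < n ∧ n < N then Complex.I else 0

/-- The symbol of the Fourier multiplier `cwpT N`. -/
noncomputable def cwpSymbol (N n : ℕ) : ℂ :=
  if n = 0 ∨ n = N / 2 then 1 else if n < N / 2 then -Complex.I else Complex.I

theorem psi1_eq_idft (N p lam : ℕ) : psi1 N p lam = idft N (psiHat N p lam) := rfl

theorem hilbertT_eq_fourierMultiplier (N : ℕ) :
    hilbertT N = fourierMultiplier N (hilbertSymbol N) := rfl

theorem cwpT_eq_fourierMultiplier (N : ℕ) : cwpT N = fourierMultiplier N (cwpSymbol N) := rfl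

theorem conj_hilbertT (hNe : Even N) {x : ℤ → ℂ} (hx : ∀ k, conj (x k) = x k) (k : ℤ) :
    conj (hilbertT N x k) = hilbertT N x k := by
  have hdvd := hNe.two_dvd
  rw [hilbertT_eq_fourierMultiplier]
  refine conj_fourierMultiplier (by simp [hilbertSymbol]) (fun n hn hnN ↦ ?_) hx k
  unfold hilbertSymbol
  split_ifs <;> first | omega | simp

theorem eq_or_eq_add_or_eq_add_of_modEq {m n M : ℕ} (hm : m < 2 * M) (hn : n < 2 * M)
    (h : m ≡ n [MOD M]) : m = n ∨ m = n + M ∨ n = m + M := by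
  have hm' := Nat.mod_add_div m M
  have hn' := Nat.mod_add_div n M
  have hmM : m / M < 2 := Nat.div_lt_of_lt_mul (mul_comm 2 M ▸ hm)
  have hnM : n / M < 2 := Nat.div_lt_of_lt_mul (mul_comm 2 M ▸ hn)
  rw [Nat.ModEq] at h
  interval_cases m / M <;> interval_cases n / M <;> omega

theorem isParaunitary_psiHat (hNe : Even N) (hp : 2 ≤ p) (hpN : p ≤ N / 2)
    (hpos : ∀ n, 0 < upsilon N p n) : IsParaunitary N 2 (N / 2) (range 2) (psiHat N p) := by
  intro m hm n hn hmn
  have hN : N ≠ 0 := by omega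
  have hgram : ∑ lam ∈ range 2, psiHat N p lam m * conj (psiHat N p lam n) =
      betaS N p m * betaS N p n +
        ww N ^ ((m : ℤ) - n) * (betaS N p (m + N / 2) * betaS N p (n + N / 2)) := by
    simp only [sum_range_succ, sum_range_zero, zero_add, psiHat, if_true, one_ne_zero, if_false,
      alphaS, map_mul, conj_ww_zpow, conj_betaS hp hpN (hpos _).le]
    rw [sub_eq_add_neg, zpow_add₀ (ww_ne_zero N)]
    ring
  have hN2 := Nat.two_mul_div_two_of_even hNe
  rw [hgram]
  rcases eq_or_eq_add_or_eq_add_of_modEq (hm.trans_eq hN2.symm) (hn.trans_eq hN2.symm) hmn with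
    rfl | rfl | rfl
  · rw [if_pos rfl, sub_self, zpow_zero, one_mul, ← sq, ← sq,
      betaS_sq_add_betaS_sq hNe hp hpN (hpos m).ne', Nat.cast_ofNat]
  · rw [if_neg (by omega)]
    push_cast
    rw [betaS_add_half_add_half hNe hp hpN, add_sub_cancel_left, ww_zpow_half hN hNe]
    ring
  · rw [if_neg (by omega)]
    push_cast
    rw [betaS_add_half_add_half hNe hp hpN, sub_add_cancel_left, zpow_neg,
      ww_zpow_half hN hNe]
    ring

theorem one_add_mul_cwpSymbol_mul_conj (hNe : Even N) {ε : ℂ} (hε : ε = Complex.I ∨ ε = -Complex.I)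
    {n : ℕ} (hn : n < N) :
    (1 + ε * cwpSymbol N n) * conj (1 + ε * cwpSymbol N n) = 2 * (1 + ε * hilbertSymbol N n) := by
  have hdvd := hNe.two_dvd
  unfold cwpSymbol hilbertSymbol
  rcases hε with rfl | rfl <;> split_ifs <;>
    first
    | omega
    | apply Complex.ext <;> simp <;> norm_num

/-- The packets `ψ_{[1],λ} + ε C(ψ_{[1],λ})`; those of the statement are the cases `ε = ±i`. -/
noncomputable def qwp (N p : ℕ) (ε : ℂ) (lam : ℕ) : ℤ → ℂ :=
  psi1 N p lam + ε • cwpT N (psi1 N p lam)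

theorem qwpP_eq_qwp (N p : ℕ) : qwpP N p = qwp N p Complex.I := rfl

theorem qwpM_eq_qwp (N p : ℕ) : qwpM N p = qwp N p (-Complex.I) := by
  ext lam k
  simp [qwpM, qwp, sub_eq_add_neg]

theorem qwp_eq_idft (N p : ℕ) (ε : ℂ) (lam : ℕ) :
    qwp N p ε lam = idft N fun n ↦ (1 + ε * cwpSymbol N n) * psiHat N p lam n := by
  rw [qwp, cwpT_eq_fourierMultiplier, psi1_eq_idft, fourierMultiplier_idft, ← map_smul, ← map_add]
  congr 1
  ext n
  simp only [Pi.add_apply, Pi.smul_apply, smul_eq_mul]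
  ring

theorem frameOp_qwp (hNe : Even N) (hp : 2 ≤ p) (hpN : p ≤ N / 2)
    (hpos : ∀ n, 0 < upsilon N p n) {ε : ℂ} (hε : ε = Complex.I ∨ ε = -Complex.I) {x : ℤ → ℂ}
    (hx : Function.Periodic x N) :
    frameOp N (range 2 ×ˢ range (N / 2)) (translates 2 (qwp N p ε)) x =
      (2 : ℂ) • (x + ε • hilbertT N x) := by
  have hN : N ≠ 0 := by omega
  calc _ = fourierMultiplier N ((2 : ℂ) • (1 + ε • hilbertSymbol N)) x := by
        rw [funext (qwp_eq_idft N p ε), frameOp_translates_idft hN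
          (Nat.two_mul_div_two_of_even hNe) (isParaunitary_psiHat hNe hp hpN hpos)]
        exact idft_congr fun n hn ↦
          congrArg (· * _) (one_add_mul_cwpSymbol_mul_conj hNe hε hn)
    _ = _ := by
        simp only [map_smul, map_add, LinearMap.smul_apply, LinearMap.add_apply,
          fourierMultiplier_one hN hx, hilbertT_eq_fourierMultiplier]

theorem frame_expansion_qwp_mul_qwp (hNe : Even N) (hp : 2 ≤ p) (hpN : p ≤ N / 2)
    (hpos : ∀ n, 0 < upsilon N p n) {δ ε : ℂ} (hδ : δ = Complex.I ∨ δ = -Complex.I)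
    (hε : ε = Complex.I ∨ ε = -Complex.I) {X : ℤ → ℤ → ℂ}
    (hX1 : ∀ k n, X (k + N) n = X k n) (hX2 : ∀ k n, X k (n + N) = X k n) (k n : ℤ) :
    ∑ j ∈ range 2, ∑ l ∈ range 2, ∑ a ∈ range (N / 2), ∑ b ∈ range (N / 2),
        inner2 N X (fun k' n' ↦
          qwp N p δ j (k' - 2 * (a : ℤ)) * qwp N p ε l (n' - 2 * (b : ℤ))) *
        (qwp N p δ j (k - 2 * (a : ℤ)) * qwp N p ε l (n - 2 * (b : ℤ))) =
      4 * (X k n + ε * Hh N X k n + δ * Hv N X k n + δ * ε * Hh N (Hv N X) k n) := by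
  have hcol (n' : ℤ) : frameOp N (range 2 ×ˢ range (N / 2)) (translates 2 (qwp N p δ))
      (fun k' ↦ X k' n') k = ((2 : ℂ) • (X k + δ • Hv N X k)) n' :=
    congrFun (frameOp_qwp hNe hp hpN hpos hδ fun k' ↦ hX1 k' n') k
  have hrow : Function.Periodic ((2 : ℂ) • (X k + δ • Hv N X k)) N := fun n' ↦ by
    simp only [Pi.smul_apply, Pi.add_apply, Hv, hX2]
  calc _ = frameOp N (range 2 ×ˢ range (N / 2)) (translates 2 (qwp N p ε))
        (fun n' ↦ frameOp N (range 2 ×ˢ range (N / 2)) (translates 2 (qwp N p δ))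
          (fun k' ↦ X k' n') k) n := by
        rw [← sum_inner2_mul_eq_frameOp_frameOp]
        simp only [sum_product, sum_comm (s := range 2) (t := range (N / 2))]
        rfl
    _ = _ := by
        simp only [hcol]
        rw [frameOp_qwp hNe hp hpN hpos hε hrow, hilbertT_eq_fourierMultiplier]
        simp only [map_smul, map_add, ← hilbertT_eq_fourierMultiplier, Pi.smul_apply, Pi.add_apply,
          smul_eq_mul, Hh]
        ring

end WaveletPackets

/-- X_+ = 4(X + iH^h(X) + iH^v(X) − H^h(H^v(X))),
    X_− = 4(X − iH^h(X) + iH^v(X) + H^h(H^v(X))); consequently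
    (X_+ + X_−)/8 = X + iH^v(X), and for real-valued X, X = Re((X_+ + X_−)/8). -/
theorem qwp_2d_frame_reconstruction (N p : ℕ) (hN : 0 < N) (hNe : Even N)
    (hp : 2 ≤ p) (hpN : p ≤ N / 2)
    (hpos : ∀ n : ℤ, 0 < uSeq N p (2 * n) ^ 2 + vSeq N p (2 * n) ^ 2)
    (X : ℤ → ℤ → ℂ)
    (hX1 : ∀ k n : ℤ, X (k + N) n = X k n) (hX2 : ∀ k n : ℤ, X k (n + N) = X k n) :
    (∀ k n : ℤ, XPlus N p X k n
      = 4 * (X k n + Complex.I * Hh N X k n + Complex.I * Hv N X k n - Hh N (Hv N X) k n)) ∧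
    (∀ k n : ℤ, XMinus N p X k n
      = 4 * (X k n - Complex.I * Hh N X k n + Complex.I * Hv N X k n + Hh N (Hv N X) k n)) ∧
    (∀ k n : ℤ, (XPlus N p X k n + XMinus N p X k n) / 8
      = X k n + Complex.I * Hv N X k n) ∧
    ((∀ k n : ℤ, (X k n).im = 0) → ∀ k n : ℤ,
      X k n = ((((XPlus N p X k n + XMinus N p X k n) / 8).re : ℝ) : ℂ)) := by
  have hΥ : ∀ n, 0 < upsilon N p n := fun n ↦ div_pos (hpos n) four_pos
  have hplus : ∀ k n : ℤ, XPlus N p X k n = 4 * (X k n + Complex.I * Hh N X k n +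
      Complex.I * Hv N X k n - Hh N (Hv N X) k n) := fun k n ↦ by
    rw [XPlus, qwpP_eq_qwp, frame_expansion_qwp_mul_qwp hNe hp hpN hΥ (.inl rfl) (.inl rfl)
      hX1 hX2, Complex.I_mul_I]
    ring
  have hminus : ∀ k n : ℤ, XMinus N p X k n = 4 * (X k n - Complex.I * Hh N X k n +
      Complex.I * Hv N X k n + Hh N (Hv N X) k n) := fun k n ↦ by
    rw [XMinus, qwpP_eq_qwp, qwpM_eq_qwp, frame_expansion_qwp_mul_qwp hNe hp hpN hΥ
      (.inl rfl) (.inr rfl) hX1 hX2, mul_neg, Complex.I_mul_I]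
    ring
  have hsum : ∀ k n : ℤ, (XPlus N p X k n + XMinus N p X k n) / 8 =
      X k n + Complex.I * Hv N X k n := fun k n ↦ by
    rw [hplus, hminus]
    ring
  refine ⟨hplus, hminus, hsum, fun hreal k n ↦ ?_⟩
  have hHv : (Hv N X k n).im = 0 := Complex.conj_eq_iff_im.1 <|
    conj_hilbertT hNe (fun j ↦ Complex.conj_eq_iff_im.2 (hreal j n)) k
  rw [hsum]
  apply Complex.ext <;> simp [hHv, hreal]

end WP
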